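/- In U(𝔤): (F₂₁²)_L(a) = −2F₂₁ and (F₂₁³)_L(a) = 0; there exist nonzero rational numbers C₁, C₂ such that (F₂₁⁴)_L(b) = C₁·(F₃₁F₁₁ − F₃₂F₁₀) and (F₂₁⁶)_L(c) = C₂·(F₃₁²F₀₁ − F₃₂F₃₁H₀₁ − F₃₂²E₀₁); moreover (F₂₁⁵)_L(b) = 0 and (F₂₁⁷)_L(c) = 0. (The paper gives C₁ = 4! and C₂ = −6!.) -/

import Mathlib

/-- The canonical embedding of a Lie algebra into its universal enveloping algebra. -/
noncomputable def ιU {L : Type*} [LieRing L] [LieAlgebra ℂ L] (x : L) :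
    UniversalEnvelopingAlgebra ℂ L :=
  UniversalEnvelopingAlgebra.ι ℂ x

/-- The adjoint action `X_L : f ↦ Xf − fX` of `X ∈ L` on `U(L)`. -/
noncomputable def adU {L : Type*} [LieRing L] [LieAlgebra ℂ L] (x : L)
    (f : UniversalEnvelopingAlgebra ℂ L) : UniversalEnvelopingAlgebra ℂ L :=
  ιU x * f - f * ιU x

/-- A Lie algebra over `ℂ` equipped with Chevalley generators of type `G₂`:
`E₁₀, F₁₀, H₁₀` correspond to the short simple root `α` and `E₀₁, F₀₁, H₀₁` to the long
simple root `β`, subject to the Chevalley relations and the Serre relations, and the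
generators generate the Lie algebra.  (By Serre's theorem such a Lie algebra is a quotient of
the simple Lie algebra of type `G₂`.) -/
structure G2Gens (L : Type*) [LieRing L] [LieAlgebra ℂ L] where
  E10 : L
  E01 : L
  F10 : L
  F01 : L
  H10 : L
  H01 : L
  hH10H01 : ⁅H10, H01⁆ = 0
  hE10F10 : ⁅E10, F10⁆ = H10
  hE01F01 : ⁅E01, F01⁆ = H01
  hE10F01 : ⁅E10, F01⁆ = 0
  hE01F10 : ⁅E01, F10⁆ = 0
  hH10E10 : ⁅H10, E10⁆ = (2 : ℂ) • E10
  hH01E01 : ⁅H01, E01⁆ = (2 : ℂ) • E01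
  hH10E01 : ⁅H10, E01⁆ = (-3 : ℂ) • E01
  hH01E10 : ⁅H01, E10⁆ = (-1 : ℂ) • E10
  hH10F10 : ⁅H10, F10⁆ = (-2 : ℂ) • F10
  hH01F01 : ⁅H01, F01⁆ = (-2 : ℂ) • F01
  hH10F01 : ⁅H10, F01⁆ = (3 : ℂ) • F01
  hH01F10 : ⁅H01, F10⁆ = (1 : ℂ) • F10
  serreE1 : ⁅E10, ⁅E10, ⁅E10, ⁅E10, E01⁆⁆⁆⁆ = 0
  serreE2 : ⁅E01, ⁅E01, E10⁆⁆ = 0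
  serreF1 : ⁅F10, ⁅F10, ⁅F10, ⁅F10, F01⁆⁆⁆⁆ = 0
  serreF2 : ⁅F01, ⁅F01, F10⁆⁆ = 0
  generates : LieSubalgebra.lieSpan ℂ L {E10, E01, F10, F01, H10, H01} = ⊤

namespace G2Gens

variable {L : Type*} [LieRing L] [LieAlgebra ℂ L] (g : G2Gens L)

/-- The root vector `E₁₁ = [E₁₀, E₀₁]`. -/
def E11 : L := ⁅g.E10, g.E01⁆
/-- The root vector `E₂₁ = (1/2)[E₁₁, E₁₀]`. -/
noncomputable def E21 : L := (2 : ℂ)⁻¹ • ⁅g.E11, g.E10⁆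
/-- The root vector `E₃₁ = (1/3)[E₂₁, E₁₀]`. -/
noncomputable def E31 : L := (3 : ℂ)⁻¹ • ⁅g.E21, g.E10⁆
/-- The root vector `E₃₂ = [E₃₁, E₀₁]`. -/
noncomputable def E32 : L := ⁅g.E31, g.E01⁆
/-- The root vector `F₁₁ = [F₀₁, F₁₀]`. -/
def F11 : L := ⁅g.F01, g.F10⁆
/-- The root vector `F₂₁ = (1/2)[F₁₀, F₁₁]`. -/
noncomputable def F21 : L := (2 : ℂ)⁻¹ • ⁅g.F10, g.F11⁆
/-- The root vector `F₃₁ = (1/3)[F₁₀, F₂₁]`. -/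
noncomputable def F31 : L := (3 : ℂ)⁻¹ • ⁅g.F10, g.F21⁆
/-- The root vector `F₃₂ = [F₀₁, F₃₁]`. -/
noncomputable def F32 : L := ⁅g.F01, g.F31⁆
/-- The coroot `H₁₁ = H₁₀ + 3H₀₁`. -/
def H11 : L := g.H10 + (3 : ℂ) • g.H01
/-- The coroot `H₂₁ = 2H₁₀ + 3H₀₁`. -/
def H21 : L := (2 : ℂ) • g.H10 + (3 : ℂ) • g.H01
/-- The coroot `H₃₁ = H₁₀ + H₀₁`. -/
def H31 : L := g.H10 + g.H01
/-- The coroot `H₃₂ = H₁₀ + 2H₀₁`. -/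
def H32 : L := g.H10 + (2 : ℂ) • g.H01

/-- The element `a = E₂₁` of `U(𝔤)`. -/
noncomputable def aU : UniversalEnvelopingAlgebra ℂ L := ιU g.E21
/-- The element `b = E₃₁E₁₁ − E₃₂E₁₀` of `U(𝔤)`. -/
noncomputable def bU : UniversalEnvelopingAlgebra ℂ L :=
  ιU g.E31 * ιU g.E11 - ιU g.E32 * ιU g.E10
/-- The element `c = E₃₁²E₀₁ − E₃₂E₃₁H₀₁ − E₃₂²F₀₁` of `U(𝔤)`. -/
noncomputable def cU : UniversalEnvelopingAlgebra ℂ L :=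
  ιU g.E31 * ιU g.E31 * ιU g.E01 - ιU g.E32 * ιU g.E31 * ιU g.H01
    - ιU g.E32 * ιU g.E32 * ιU g.F01
/-- The element `u = (1/3)a² − b` of `U(𝔤)`. -/
noncomputable def uU : UniversalEnvelopingAlgebra ℂ L :=
  (3 : ℂ)⁻¹ • (g.aU * g.aU) - g.bU
/-- The element `v = (2/9)a³ − ab − 3c` of `U(𝔤)`. -/
noncomputable def vU : UniversalEnvelopingAlgebra ℂ L :=
  ((2 : ℂ) / 9) • (g.aU * g.aU * g.aU) - g.aU * g.bU - (3 : ℂ) • g.cU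

/-- `f ≡ h (mod U(𝔤)𝔫₊)`:  `f − h` lies in the left ideal of `U(𝔤)` generated by `E₁₀`
and `E₀₁`. -/
def EqModN (f h : UniversalEnvelopingAlgebra ℂ L) : Prop :=
  ∃ A B : UniversalEnvelopingAlgebra ℂ L, f - h = A * ιU g.E10 + B * ιU g.E01

end G2Gens

namespace G2Gens

section Brackets

variable {L : Type*} [LieRing L] [LieAlgebra ℂ L] (g : G2Gens L)

/-- Reversing a bracket. -/
theorem flip_lie {x y z : L} (h : ⁅x, y⁆ = z) : ⁅y, x⁆ = -z := by
  rw [← lie_skew, h]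

/-- Bracket with `F₁₁` in terms of the simple root vectors. -/
theorem F11_lie (x : L) : ⁅g.F11, x⁆ = ⁅g.F01, ⁅g.F10, x⁆⁆ - ⁅g.F10, ⁅g.F01, x⁆⁆ := by
  rw [F11, lie_lie]

/-- Bracket with `F₂₁` in terms of `F₁₀` and `F₁₁`. -/
theorem F21_lie (x : L) :
    ⁅g.F21, x⁆ = (2 : ℂ)⁻¹ • (⁅g.F10, ⁅g.F11, x⁆⁆ - ⁅g.F11, ⁅g.F10, x⁆⁆) := by
  rw [F21, smul_lie, lie_lie]

theorem F10_E10 : ⁅g.F10, g.E10⁆ = -g.H10 := flip_lie g.hE10F10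
theorem F01_E10 : ⁅g.F01, g.E10⁆ = 0 := by simpa using flip_lie g.hE10F01
theorem F10_E01 : ⁅g.F10, g.E01⁆ = 0 := by simpa using flip_lie g.hE01F10
theorem F01_E01 : ⁅g.F01, g.E01⁆ = -g.H01 := flip_lie g.hE01F01
theorem F10_H10 : ⁅g.F10, g.H10⁆ = (2 : ℂ) • g.F10 := by simpa using flip_lie g.hH10F10
theorem F10_H01 : ⁅g.F10, g.H01⁆ = -g.F10 := by simpa using flip_lie g.hH01F10
theorem F01_H10 : ⁅g.F01, g.H10⁆ = (-3 : ℂ) • g.F01 := by simpa using flip_lie g.hH10F01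
theorem F01_H01 : ⁅g.F01, g.H01⁆ = (2 : ℂ) • g.F01 := by simpa using flip_lie g.hH01F01
theorem E10_H10 : ⁅g.E10, g.H10⁆ = (-2 : ℂ) • g.E10 := by simpa using flip_lie g.hH10E10
theorem E10_H01 : ⁅g.E10, g.H01⁆ = g.E10 := by simpa using flip_lie g.hH01E10
theorem E01_E10 : ⁅g.E01, g.E10⁆ = -g.E11 := flip_lie rfl

theorem E11_E10 : ⁅g.E11, g.E10⁆ = (2 : ℂ) • g.E21 := by
  simp [E21]
theorem E21_E10 : ⁅g.E21, g.E10⁆ = (3 : ℂ) • g.E31 := by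
  simp [E31]

theorem H10_E11 : ⁅g.H10, g.E11⁆ = -g.E11 := by
  rw [E11, leibniz_lie, g.hH10E10, g.hH10E01, smul_lie, lie_smul]; module
theorem H01_E11 : ⁅g.H01, g.E11⁆ = g.E11 := by
  rw [E11, leibniz_lie, g.hH01E10, g.hH01E01, smul_lie, lie_smul]; module
theorem H10_E21 : ⁅g.H10, g.E21⁆ = g.E21 := by
  rw [E21, lie_smul, leibniz_lie, H10_E11, g.hH10E10, neg_lie, lie_smul]; module
theorem H01_E21 : ⁅g.H01, g.E21⁆ = 0 := by
  rw [E21, lie_smul, leibniz_lie, H01_E11, g.hH01E10, lie_smul]; module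
theorem H01_E31 : ⁅g.H01, g.E31⁆ = -g.E31 := by
  rw [E31, lie_smul, leibniz_lie, H01_E21, g.hH01E10, zero_lie, lie_smul]; module

theorem F10_E11 : ⁅g.F10, g.E11⁆ = (3 : ℂ) • g.E01 := by
  rw [E11, leibniz_lie, F10_E10, F10_E01, neg_lie, g.hH10E01, lie_zero]; module
theorem F01_E11 : ⁅g.F01, g.E11⁆ = -g.E10 := by
  rw [E11, leibniz_lie, F01_E10, F01_E01, lie_neg, E10_H01, zero_lie]; module
theorem F10_E21 : ⁅g.F10, g.E21⁆ = (-2 : ℂ) • g.E11 := by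
  rw [E21, lie_smul, leibniz_lie, F10_E11, F10_E10, smul_lie, lie_neg, E01_E10,
    flip_lie g.H10_E11]; module
theorem F01_E21 : ⁅g.F01, g.E21⁆ = 0 := by
  rw [E21, lie_smul, leibniz_lie, F01_E11, F01_E10, neg_lie, lie_self, lie_zero]; module
theorem F10_E31 : ⁅g.F10, g.E31⁆ = -g.E21 := by
  rw [E31, lie_smul, leibniz_lie, F10_E21, F10_E10, smul_lie, lie_neg, E11_E10,
    flip_lie g.H10_E21]; module
theorem F01_E31 : ⁅g.F01, g.E31⁆ = 0 := by
  rw [E31, lie_smul, leibniz_lie, F01_E21, F01_E10, zero_lie, lie_zero]; module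
theorem E01_E11 : ⁅g.E01, g.E11⁆ = 0 := by
  have h := g.serreE2
  rw [E01_E10, lie_neg, neg_eq_zero] at h
  exact h
theorem E01_E21 : ⁅g.E01, g.E21⁆ = 0 := by
  rw [E21, lie_smul, leibniz_lie, E01_E11, E01_E10, zero_lie, lie_neg, lie_self]; module
theorem F10_E32 : ⁅g.F10, g.E32⁆ = 0 := by
  rw [E32, leibniz_lie, F10_E31, F10_E01, neg_lie, flip_lie g.E01_E21, lie_zero]; module
theorem F01_E32 : ⁅g.F01, g.E32⁆ = -g.E31 := by
  rw [E32, leibniz_lie, F01_E31, F01_E01, zero_lie, lie_neg, flip_lie g.H01_E31]; module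

theorem F10_F01 : ⁅g.F10, g.F01⁆ = -g.F11 := flip_lie rfl
theorem F01_F10 : ⁅g.F01, g.F10⁆ = g.F11 := rfl
theorem F10_F11 : ⁅g.F10, g.F11⁆ = (2 : ℂ) • g.F21 := by simp [F21]
theorem F01_F11 : ⁅g.F01, g.F11⁆ = 0 := g.serreF2
theorem F10_F21 : ⁅g.F10, g.F21⁆ = (3 : ℂ) • g.F31 := by simp [F31]
theorem F01_F21 : ⁅g.F01, g.F21⁆ = 0 := by
  rw [F21, lie_smul, leibniz_lie, F01_F10, F01_F11, lie_self, lie_zero]; module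
theorem F10_F31 : ⁅g.F10, g.F31⁆ = 0 := by
  have h := g.serreF1
  rw [F10_F01, lie_neg, F10_F11, lie_neg, lie_smul, F10_F21, lie_neg, lie_smul, lie_smul] at h
  have h6 : (-6 : ℂ) • ⁅g.F10, g.F31⁆ = 0 := by rw [← h]; module
  simpa using h6
theorem F01_F31 : ⁅g.F01, g.F31⁆ = g.F32 := rfl
theorem F11_F21 : ⁅g.F11, g.F21⁆ = (3 : ℂ) • g.F32 := by
  rw [F11_lie, F10_F21, F01_F21, lie_smul, F01_F31, lie_zero, sub_zero]
theorem F01_F32 : ⁅g.F01, g.F32⁆ = 0 := by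
  have h : g.F32 = (3 : ℂ)⁻¹ • ⁅g.F11, g.F21⁆ := by rw [F11_F21]; module
  rw [h, lie_smul, leibniz_lie, F01_F11, F01_F21, zero_lie, lie_zero]; module
theorem F11_F31 : ⁅g.F11, g.F31⁆ = 0 := by
  have h1 : ⁅g.F11, g.F31⁆ = -⁅g.F10, g.F32⁆ := by
    rw [F11_lie, F10_F31, F01_F31, lie_zero, zero_sub]
  have h2 : ⁅g.F10, (3 : ℂ) • g.F32⁆ = (3 : ℂ) • ⁅g.F11, g.F31⁆ := by
    rw [← F11_F21, leibniz_lie, F10_F11, F10_F21, smul_lie, lie_self, lie_smul]; module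
  have h3 : (6 : ℂ) • ⁅g.F11, g.F31⁆ = 0 := by
    rw [lie_smul] at h2
    calc (6 : ℂ) • ⁅g.F11, g.F31⁆
        = (3 : ℂ) • ⁅g.F11, g.F31⁆ + (3 : ℂ) • ⁅g.F11, g.F31⁆ := by module
      _ = (3 : ℂ) • ⁅g.F10, g.F32⁆ + (3 : ℂ) • -⁅g.F10, g.F32⁆ := by rw [h2, ← h1]
      _ = 0 := by module
  simpa using h3
theorem F10_F32 : ⁅g.F10, g.F32⁆ = 0 := by
  have h1 : ⁅g.F11, g.F31⁆ = -⁅g.F10, g.F32⁆ := by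
    rw [F11_lie, F10_F31, F01_F31, lie_zero, zero_sub]
  rw [F11_F31] at h1
  exact neg_eq_zero.mp h1.symm

/-! The action of `F₂₁` on the root vectors. -/

theorem F21_E31 : ⁅g.F21, g.E31⁆ = g.E10 := by
  simp only [F21_lie, F11_lie, F10_E31, F01_E31, lie_neg, lie_zero, F01_E21, F10_E21, lie_smul,
    F01_E11, lie_sub]; module
theorem F21_E10 : ⁅g.F21, g.E10⁆ = (-2 : ℂ) • g.F11 := by
  simp only [F21_lie, F11_lie, F10_E10, F01_E10, lie_neg, lie_zero, F01_H10, F10_H10, lie_smul,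
    F10_F01, F01_F10, lie_sub]; module
theorem F21_F11 : ⁅g.F21, g.F11⁆ = (-3 : ℂ) • g.F32 := by
  rw [flip_lie g.F11_F21]; module
theorem F21_F32 : ⁅g.F21, g.F32⁆ = 0 := by
  simp [F21_lie, F11_lie, F10_F32, F01_F32]
theorem F21_E32 : ⁅g.F21, g.E32⁆ = g.E11 := by
  simp only [F21_lie, F11_lie, F10_E32, F01_E32, lie_neg, lie_zero, F10_E31, F10_E21,
    lie_sub]; module
theorem F21_E11 : ⁅g.F21, g.E11⁆ = (2 : ℂ) • g.F10 := by
  simp only [F21_lie, F11_lie, F10_E11, F01_E11, lie_neg, lie_zero, lie_smul, F10_E10, F10_E01,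
    F01_E01, F10_H01, F10_H10, lie_sub]; module
theorem F21_F10 : ⁅g.F21, g.F10⁆ = (-3 : ℂ) • g.F31 := by
  rw [flip_lie g.F10_F21]; module
theorem F21_F31 : ⁅g.F21, g.F31⁆ = 0 := by
  rw [F21_lie, F11_F31, F10_F31]; simp
theorem F21_E01 : ⁅g.F21, g.E01⁆ = 0 := by
  simp [F21_lie, F11_lie, F10_E01, F01_E01, F10_H01]
theorem F21_F01 : ⁅g.F21, g.F01⁆ = 0 := by
  simpa using flip_lie g.F01_F21
theorem F21_H01 : ⁅g.F21, g.H01⁆ = 0 := by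
  simp only [F21_lie, F11_lie, F10_H01, F01_H01, lie_neg, lie_zero, lie_smul, F10_F01, F01_F10,
    lie_self, F10_F11, lie_sub]; module
theorem F21_H10 : ⁅g.F21, g.H10⁆ = g.F21 := by
  simp only [F21_lie, F11_lie, F10_H10, F01_H10, lie_neg, lie_zero, lie_smul, F10_F01, F01_F10,
    lie_self, F10_F11, lie_sub]; module
theorem F21_E21 : ⁅g.F21, g.E21⁆ = -g.H21 := by
  simp only [F21_lie, F11_lie, F10_E21, F01_E21, lie_neg, lie_zero, lie_smul, F10_E11, F01_E11,
    F10_E10, F01_E01, lie_sub, H21]; module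
theorem F21_H21 : ⁅g.F21, g.H21⁆ = (2 : ℂ) • g.F21 := by
  rw [H21, lie_add, lie_smul, lie_smul, F21_H10, F21_H01]; module
theorem F31_F32 : ⁅g.F31, g.F32⁆ = 0 := by
  rw [F31, smul_lie, lie_lie, F21_F32, F10_F32]; simp

end Brackets

section Enveloping

variable {L : Type*} [LieRing L] [LieAlgebra ℂ L]

theorem ιU_smul (c : ℂ) (x : L) : ιU (c • x) = c • ιU x := by simp [ιU]
theorem ιU_neg (x : L) : ιU (-x) = -ιU x := by simp [ιU]
theorem ιU_zero : ιU (0 : L) = 0 := by simp [ιU]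
theorem adU_ιU (x y : L) : adU x (ιU y) = ιU ⁅x, y⁆ := by
  simp [adU, ιU, LieRing.of_associative_ring_bracket]
theorem adU_mul (x : L) (f h : UniversalEnvelopingAlgebra ℂ L) :
    adU x (f * h) = adU x f * h + f * adU x h := by
  simp only [adU]; noncomm_ring
theorem adU_add (x : L) (f h : UniversalEnvelopingAlgebra ℂ L) :
    adU x (f + h) = adU x f + adU x h := by
  simp only [adU]; noncomm_ring
theorem adU_sub (x : L) (f h : UniversalEnvelopingAlgebra ℂ L) :
    adU x (f - h) = adU x f - adU x h := by
  simp only [adU]; noncomm_ring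
theorem adU_neg (x : L) (f : UniversalEnvelopingAlgebra ℂ L) :
    adU x (-f) = -adU x f := by
  simp only [adU]; noncomm_ring
theorem adU_smul (x : L) (c : ℂ) (f : UniversalEnvelopingAlgebra ℂ L) :
    adU x (c • f) = c • adU x f := by
  simp only [adU, mul_smul_comm, smul_mul_assoc, smul_sub]
theorem adU_zero (x : L) : adU x 0 = 0 := by
  simp [adU]

theorem ιU_comm {x y : L} (h : ⁅x, y⁆ = 0) : ιU x * ιU y = ιU y * ιU x := by
  have := adU_ιU x y
  rw [h, ιU_zero, adU] at this
  exact sub_eq_zero.mp this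

end Enveloping

end G2Gens

/-- **Lemma A.4, first family (lem-firststep).**  Identities in `U(𝔤)` for the adjoint action
of powers of `F₂₁` on `a`, `b`, `c`. -/
theorem G2Gens.adF21_identities
    {L : Type*} [LieRing L] [LieAlgebra ℂ L] (g : G2Gens L) :
    (adU g.F21)^[2] g.aU = (-2 : ℂ) • ιU g.F21 ∧
    (adU g.F21)^[3] g.aU = 0 ∧
    ∃ C₁ C₂ : ℚ, C₁ ≠ 0 ∧ C₂ ≠ 0 ∧
      (adU g.F21)^[4] g.bU =
        (C₁ : ℂ) • (ιU g.F31 * ιU g.F11 - ιU g.F32 * ιU g.F10) ∧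
      (adU g.F21)^[6] g.cU =
        (C₂ : ℂ) • (ιU g.F31 * ιU g.F31 * ιU g.F01 - ιU g.F32 * ιU g.F31 * ιU g.H01
          - ιU g.F32 * ιU g.F32 * ιU g.E01) ∧
      (adU g.F21)^[5] g.bU = 0 ∧
      (adU g.F21)^[7] g.cU = 0 := by
  have dE31 : adU g.F21 (ιU g.E31) = ιU g.E10 := by rw [adU_ιU, F21_E31]
  have dE10 : adU g.F21 (ιU g.E10) = (-2 : ℂ) • ιU g.F11 := by rw [adU_ιU, F21_E10, ιU_smul]
  have dF11 : adU g.F21 (ιU g.F11) = (-3 : ℂ) • ιU g.F32 := by rw [adU_ιU, F21_F11, ιU_smul]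
  have dF32 : adU g.F21 (ιU g.F32) = 0 := by rw [adU_ιU, F21_F32, ιU_zero]
  have dE32 : adU g.F21 (ιU g.E32) = ιU g.E11 := by rw [adU_ιU, F21_E32]
  have dE11 : adU g.F21 (ιU g.E11) = (2 : ℂ) • ιU g.F10 := by rw [adU_ιU, F21_E11, ιU_smul]
  have dF10 : adU g.F21 (ιU g.F10) = (-3 : ℂ) • ιU g.F31 := by rw [adU_ιU, F21_F10, ιU_smul]
  have dF31 : adU g.F21 (ιU g.F31) = 0 := by rw [adU_ιU, F21_F31, ιU_zero]
  have dE01 : adU g.F21 (ιU g.E01) = 0 := by rw [adU_ιU, F21_E01, ιU_zero]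
  have dF01 : adU g.F21 (ιU g.F01) = 0 := by rw [adU_ιU, F21_F01, ιU_zero]
  have dH01 : adU g.F21 (ιU g.H01) = 0 := by rw [adU_ιU, F21_H01, ιU_zero]
  have c1 : ιU g.F11 * ιU g.F31 = ιU g.F31 * ιU g.F11 := ιU_comm g.F11_F31
  have c2 : ιU g.F10 * ιU g.F32 = ιU g.F32 * ιU g.F10 := ιU_comm g.F10_F32
  have c3 : ιU g.F31 * ιU g.F32 = ιU g.F32 * ιU g.F31 := ιU_comm g.F31_F32
  have a2 : (adU g.F21)^[2] g.aU = (-2 : ℂ) • ιU g.F21 := by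
    simp only [Function.iterate_succ, Function.iterate_zero, Function.comp, id, aU, adU_ιU,
      F21_E21, F21_H21, ιU_neg, ιU_smul, adU_neg]
    module
  have b4 : (adU g.F21)^[4] g.bU =
      (24 : ℂ) • (ιU g.F31 * ιU g.F11 - ιU g.F32 * ιU g.F10) := by
    simp only [Function.iterate_succ, Function.iterate_zero, Function.comp, id, bU, adU_sub,
      adU_add, adU_mul, adU_smul, adU_zero, dE31, dE10, dF11, dF32, dE32, dE11, dF10, dF31,
      mul_smul_comm, smul_mul_assoc, mul_zero, zero_mul, smul_zero, add_zero, zero_add, c1, c2]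
    module
  have c6 : (adU g.F21)^[6] g.cU =
      (-720 : ℂ) • (ιU g.F31 * ιU g.F31 * ιU g.F01 - ιU g.F32 * ιU g.F31 * ιU g.H01
          - ιU g.F32 * ιU g.F32 * ιU g.E01) := by
    simp only [Function.iterate_succ, Function.iterate_zero, Function.comp, id, cU, adU_sub,
      adU_add, adU_mul, adU_smul, adU_zero, dE31, dE10, dF11, dF32, dE32, dE11, dF10, dF31,
      dE01, dF01, dH01, add_mul,
      mul_smul_comm, smul_mul_assoc, mul_zero, zero_mul, smul_zero, add_zero, zero_add, c3]
    module
  refine ⟨a2, ?_, 24, -720, by norm_num, by norm_num, ?_, ?_, ?_, ?_⟩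
  · rw [Function.iterate_succ_apply', a2, adU_smul, adU_ιU, lie_self, ιU_zero, smul_zero]
  · rw [b4]; norm_num
  · rw [c6]; norm_num
  · rw [Function.iterate_succ_apply', b4]
    simp [adU_smul, adU_sub, adU_mul, dF31, dF11, dF32, dF10, c3]
  · rw [Function.iterate_succ_apply', c6]
    simp [adU_neg, adU_smul, adU_sub, adU_mul, dF31, dF32, dF01, dH01, dE01]
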